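/- Let s ≥ 2, M ∈ ℕ, and for each nonzero ε ∈ {0,1}^s let a_ε : [1,(s+1)M] → ℂ be bounded by 1. Then 𝔼_{m∈[M]} |𝔼_{h∈[M]^s} ∏_{ε≠0} a_ε(m + ε·h)| ≤ C_s ( min_{ε≠0} ‖a_ε‖_{U^s(ℤ_{(s+1)M})}^{1/(s+1)} + 1/M ), where C_s = (s+1)^{s+1}((2s)^s + 1). -/

import Mathlib

open Finset

/-- Gowers uniformity norm `U^s(ℤ_L)` of the `L`-periodic sequence `n ↦ a (n % L)`. -/
noncomputable def gowersNorm (L : ℕ) : ℕ → (ℕ → ℂ) → ℝ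
  | 0, _ => 0
  | 1, a => ‖(L : ℂ)⁻¹ * ∑ m ∈ Finset.range L, a (m % L)‖
  | (s + 2), a =>
      ((L : ℝ)⁻¹ * ∑ h ∈ Finset.range L,
        gowersNorm L (s + 1)
          (fun n => a ((n + h) % L) * (starRingEnd ℂ) (a (n % L))) ^ (2 ^ (s + 1)))
        ^ (((2 : ℝ) ^ (s + 2))⁻¹)

/-- `ε · h = ∑ j, ε j * h j`. -/
def epsDot {s : ℕ} (ε : Fin s → Bool) (h : Fin s → ℕ) : ℕ := ∑ j, if ε j then h j else 0

/-!
Put `a ε` on `ℤ/L` with `L = (s + 1) M`, where the points `m + ε · h` do not wrap around, and absorb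
the phases of the inner averages into a function at the missing vertex `ε = 0`. What remains is a
Gowers inner product whose edges `h j` carry the weight `1_[M] (h j)`. Averaging `1_[M]` over its
translates by `0, …, ℓ` costs `O(ℓ / M)` and turns it into a convolution, and a convolution weight
on `h j` splits into functions of the two endpoints of any edge of the cube in direction `j`. As
`s ≥ 2`, this edge can be chosen to avoid a given vertex `e`, so the Gowers–Cauchy–Schwarz
inequality still bounds the smoothed form by the uniformity norm of `a e`. The choice
`ℓ ≈ M ‖a e‖ ^ (1 / (s + 1))` balances the two errors.
-/

open scoped BigOperators ComplexConjugate

section Expect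

variable {X : Type*} [Fintype X]

lemma pow_expect_le_expect_pow [Nonempty X] {f : X → ℝ} (hf : ∀ x, 0 ≤ f x) (n : ℕ) :
    (𝔼 x, f x) ^ n ≤ 𝔼 x, f x ^ n := by
  have h := Real.pow_arith_mean_le_arith_mean_pow univ (fun _ : X => (Fintype.card X : ℝ)⁻¹) f
    (fun _ _ => by positivity) (by simp) (fun x _ => hf x) n
  simpa only [Fintype.expect_eq_sum_div_card, div_eq_inv_mul, mul_sum] using h

lemma expect_le_one {f : X → ℝ} (hf : ∀ x, f x ≤ 1) : 𝔼 x, f x ≤ 1 :=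
  (expect_le_expect fun x _ => hf x).trans <| by
    cases isEmpty_or_nonempty X <;> simp

lemma expect_fin_cons {s : ℕ} {R : Type*} [AddCommMonoid R] [Module ℚ≥0 R]
    (g : (Fin (s + 1) → X) → R) :
    𝔼 h, g h = 𝔼 k, 𝔼 h : Fin s → X, g (Fin.cons k h) := by
  rw [← expect_product' univ univ fun k (h : Fin s → X) => g (Fin.cons k h)]
  exact (Fintype.expect_equiv (Fin.consEquiv fun _ : Fin (s + 1) => X) _ _ fun _ => rfl).symm

lemma prod_fin_cons {s : ℕ} {R : Type*} [CommMonoid R] (g : (Fin (s + 1) → X) → R) :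
    ∏ h, g h = ∏ k, ∏ h : Fin s → X, g (Fin.cons k h) := by
  rw [← Fintype.prod_prod_type']
  exact (Fintype.prod_equiv (Fin.consEquiv fun _ : Fin (s + 1) => X) _ _ fun _ => rfl).symm

lemma prod_expect {R : Type*} [Field R] [CharZero R] {s : ℕ} (g : Fin s → X → R) :
    ∏ j, 𝔼 x, g j x = 𝔼 y : Fin s → X, ∏ j, g j (y j) := by
  simp [Fintype.expect_eq_sum_div_card, prod_div_distrib, prod_univ_sum]

end Expect

section UniformityNorm

variable {G : Type*} [AddCommGroup G]

/-- The multiplicative derivative `Δ_k f` of `f` in direction `k`. -/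
def mulDeriv (k : G) (f : G → ℂ) (x : G) : ℂ := f (x + k) * conj (f x)

lemma norm_mulDeriv_le_one {f : G → ℂ} (hf : ∀ x, ‖f x‖ ≤ 1) (k x : G) :
    ‖mulDeriv k f x‖ ≤ 1 := by
  rw [mulDeriv, norm_mul, RCLike.norm_conj]
  exact mul_le_one₀ (hf _) (norm_nonneg _) (hf _)

variable [Fintype G]

/-- The Gowers uniformity norm `U^s(G)` on a finite abelian group, with respect to the normalized
counting measure. As in `gowersNorm`, the order `0`, which is not part of the theory, gets the
value `0`. -/
noncomputable def uniformityNorm : ℕ → (G → ℂ) → ℝ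
  | 0, _ => 0
  | 1, f => ‖𝔼 x, f x‖
  | s + 2, f =>
      (𝔼 k, uniformityNorm (s + 1) (mulDeriv k f) ^ 2 ^ (s + 1)) ^ ((2 : ℝ) ^ (s + 2))⁻¹

lemma uniformityNorm_nonneg (s : ℕ) (f : G → ℂ) : 0 ≤ uniformityNorm s f := by
  induction s using Nat.twoStepInduction generalizing f with
  | zero => exact le_rfl
  | one => exact norm_nonneg _
  | more s _ ih => exact Real.rpow_nonneg (expect_nonneg fun k _ => pow_nonneg (ih _) _) _

lemma uniformityNorm_le_one (s : ℕ) {f : G → ℂ} (hf : ∀ x, ‖f x‖ ≤ 1) :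
    uniformityNorm s f ≤ 1 := by
  induction s using Nat.twoStepInduction generalizing f with
  | zero => exact zero_le_one
  | one => exact (RCLike.norm_expect_le (K := ℂ)).trans (expect_le_one hf)
  | more s _ ih =>
    refine Real.rpow_le_one (expect_nonneg fun k _ => pow_nonneg (uniformityNorm_nonneg _ _) _)
      (expect_le_one fun k => ?_) (by positivity)
    exact pow_le_one₀ (uniformityNorm_nonneg _ _) (ih (norm_mulDeriv_le_one hf k))

lemma uniformityNorm_pow (s : ℕ) (f : G → ℂ) :
    uniformityNorm (s + 2) f ^ 2 ^ (s + 2) =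
      𝔼 k, uniformityNorm (s + 1) (mulDeriv k f) ^ 2 ^ (s + 1) := by
  have h := Real.rpow_inv_natCast_pow (n := 2 ^ (s + 2))
    (expect_nonneg fun k (_ : k ∈ univ) =>
      pow_nonneg (uniformityNorm_nonneg (s + 1) (mulDeriv k f)) (2 ^ (s + 1))) (by positivity)
  rwa [Nat.cast_pow, Nat.cast_ofNat] at h

lemma expect_uniformityNorm_mulDeriv_le (s : ℕ) (f : G → ℂ) :
    𝔼 k, uniformityNorm (s + 1) (mulDeriv k f) ≤ uniformityNorm (s + 2) f ^ 2 := by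
  refine le_of_pow_le_pow_left₀ (pow_ne_zero (s + 1) two_ne_zero) (sq_nonneg _) ?_
  calc (𝔼 k, uniformityNorm (s + 1) (mulDeriv k f)) ^ 2 ^ (s + 1)
      ≤ 𝔼 k, uniformityNorm (s + 1) (mulDeriv k f) ^ 2 ^ (s + 1) :=
        pow_expect_le_expect_pow (fun k => uniformityNorm_nonneg _ _) _
    _ = (uniformityNorm (s + 2) f ^ 2) ^ 2 ^ (s + 1) := by
        rw [← uniformityNorm_pow, ← pow_mul, ← pow_succ']

end UniformityNorm

section ZMod

lemma gowersNorm_nonneg (L s : ℕ) (a : ℕ → ℂ) : 0 ≤ gowersNorm L s a := by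
  induction s using Nat.twoStepInduction generalizing a with
  | zero => exact le_rfl
  | one => exact norm_nonneg _
  | more s _ ih =>
    exact Real.rpow_nonneg
      (mul_nonneg (by positivity) (sum_nonneg fun h _ => pow_nonneg (ih _) _)) _

variable {L : ℕ} [NeZero L]

lemma inv_mul_sum_range_eq_expect_val {K : Type*} [Field K] [CharZero K] (g : ℕ → K) :
    (L : K)⁻¹ * ∑ n ∈ range L, g n = 𝔼 x : ZMod L, g x.val := by
  rw [Fintype.expect_eq_sum_div_card, ZMod.card, div_eq_inv_mul]
  congr 1
  exact sum_bij' (fun n _ => (n : ZMod L)) (fun x _ => x.val) (fun _ _ => mem_univ _)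
    (fun x _ => mem_range.2 x.val_lt) (fun n hn => ZMod.val_cast_of_lt (mem_range.1 hn))
    (fun x _ => ZMod.natCast_zmod_val x)
    (fun n hn => by rw [ZMod.val_cast_of_lt (mem_range.1 hn)])

lemma gowersNorm_eq_uniformityNorm (s : ℕ) (a : ℕ → ℂ) :
    gowersNorm L s a = uniformityNorm s fun x : ZMod L => a x.val := by
  induction s using Nat.twoStepInduction generalizing a with
  | zero => rfl
  | one =>
    rw [gowersNorm, inv_mul_sum_range_eq_expect_val fun m => a (m % L), uniformityNorm]
    simp only [Nat.mod_eq_of_lt (ZMod.val_lt _)]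
  | more s _ ih =>
    simp only [gowersNorm, ih]
    rw [inv_mul_sum_range_eq_expect_val fun h => uniformityNorm (s + 1)
      (fun x : ZMod L => a ((x.val + h) % L) * conj (a (x.val % L))) ^ 2 ^ (s + 1)]
    rw [uniformityNorm]
    unfold mulDeriv
    simp only [ZMod.val_add, Nat.mod_eq_of_lt (ZMod.val_lt _)]

end ZMod

section Cube

/-- The vertex `ε · h` of the parallelepiped spanned by the edges `h j`, in any commutative monoid;
over `ℕ` it is `epsDot`. -/
def cubeDot {G : Type*} [AddCommMonoid G] {s : ℕ} (ε : Fin s → Bool) (h : Fin s → G) : G :=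
  ∑ j, if ε j then h j else 0

section CubeDot

variable {G : Type*} [AddCommMonoid G] {s : ℕ}

@[simp]
lemma cubeDot_zero (h : Fin s → G) : cubeDot (fun _ => false) h = 0 := by
  simp [cubeDot]

lemma cubeDot_cons (b : Bool) (ε : Fin s → Bool) (k : G) (h : Fin s → G) :
    cubeDot (Fin.cons b ε : Fin (s + 1) → Bool) (Fin.cons k h : Fin (s + 1) → G) =
      (if b then k else 0) + cubeDot ε h := by
  simp [cubeDot, Fin.sum_univ_succ]

lemma cubeDot_update_true {ε : Fin s → Bool} {j : Fin s} (hj : ε j = false) (h : Fin s → G) :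
    cubeDot (Function.update ε j true) h = cubeDot ε h + h j := by
  have off_diagonal : ∀ i ∈ ({j}ᶜ : Finset (Fin s)),
      (if Function.update ε j true i then h i else 0) = if ε i then h i else 0 := by
    intro i hi
    rw [Function.update_of_ne (by simpa using hi)]
  rw [cubeDot, cubeDot, Fintype.sum_eq_add_sum_compl j, Fintype.sum_eq_add_sum_compl j,
    sum_congr rfl off_diagonal]
  simp [hj, add_comm]

end CubeDot

variable {G : Type*} [AddCommGroup G] {s : ℕ}

/-- The product of a system of functions `f ε` over the vertices `x + ε · h` of a
parallelepiped. -/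
def cubeProd (f : (Fin s → Bool) → G → ℂ) (x : G) (h : Fin s → G) : ℂ :=
  ∏ ε, f ε (x + cubeDot ε h)

lemma norm_prod_le_one_of_forall {ι : Type*} (t : Finset ι) {g : ι → ℂ} (hg : ∀ i, ‖g i‖ ≤ 1) :
    ‖∏ i ∈ t, g i‖ ≤ 1 := by
  rw [norm_prod]
  exact prod_le_one (fun _ _ => norm_nonneg _) fun i _ => hg i

lemma cubeProd_eq_mul_prod_ne_zero (f : (Fin s → Bool) → G → ℂ) (x : G) (h : Fin s → G) :
    cubeProd f x h = f (fun _ => false) x *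
      ∏ ε ∈ univ.filter (fun ε : Fin s → Bool => ε ≠ fun _ => false), f ε (x + cubeDot ε h) := by
  rw [cubeProd, ← mul_prod_erase univ _ (mem_univ fun _ => false), cubeDot_zero, add_zero,
    filter_ne']

lemma norm_cubeProd_le {f : (Fin s → Bool) → G → ℂ} (hf : ∀ ε x, ‖f ε x‖ ≤ 1) (x : G)
    (h : Fin s → G) : ‖cubeProd f x h‖ ≤ ‖f (fun _ => false) x‖ := by
  rw [cubeProd_eq_mul_prod_ne_zero, norm_mul]
  exact mul_le_of_le_one_right (norm_nonneg _) (norm_prod_le_one_of_forall _ fun ε => hf _ _)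

lemma cubeProd_cons (f : (Fin (s + 1) → Bool) → G → ℂ) (x k : G) (h : Fin s → G) :
    cubeProd f x (Fin.cons k h) =
      cubeProd (fun ε => f (Fin.cons false ε)) x h *
        cubeProd (fun ε => f (Fin.cons true ε)) (x + k) h := by
  simp only [cubeProd, prod_fin_cons (X := Bool), Fintype.prod_bool, cubeDot_cons]
  simp [mul_comm, add_assoc]

lemma cubeProd_mulDeriv (f : (Fin s → Bool) → G → ℂ) (k x : G) (h : Fin s → G) :
    cubeProd (fun ε => mulDeriv k (f ε)) x h = mulDeriv k (fun y => cubeProd f y h) x := by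
  simp only [cubeProd, mulDeriv, map_prod, prod_mul_distrib, add_right_comm]

variable [Fintype G]

/-- The Gowers inner product of a system of functions indexed by the cube `{0,1}^s`, without the
usual conjugations. -/
noncomputable def gowersForm (f : (Fin s → Bool) → G → ℂ) : ℂ :=
  𝔼 x, 𝔼 h, cubeProd f x h

lemma gowersForm_succ (f : (Fin (s + 1) → Bool) → G → ℂ) :
    gowersForm f = 𝔼 h,
      (𝔼 x, cubeProd (fun ε => f (Fin.cons false ε)) x h) *
        𝔼 x, cubeProd (fun ε => f (Fin.cons true ε)) x h := by
  have expect_shift (x : G) (h : Fin s → G) :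
      𝔼 k, cubeProd (fun ε => f (Fin.cons true ε)) (x + k) h =
        𝔼 y, cubeProd (fun ε => f (Fin.cons true ε)) y h :=
    Fintype.expect_equiv (Equiv.addLeft x) _ _ fun _ => rfl
  simp only [gowersForm, expect_fin_cons, cubeProd_cons]
  simp only [expect_comm univ (univ : Finset (Fin s → G)), ← mul_expect, expect_shift,
    ← expect_mul]

lemma norm_gowersForm_le_expect_norm {f : (Fin (s + 1) → Bool) → G → ℂ}
    (hf : ∀ ε x, ‖f ε x‖ ≤ 1) (b : Bool) :
    ‖gowersForm f‖ ≤ 𝔼 h, ‖𝔼 x, cubeProd (fun ε => f (Fin.cons b ε)) x h‖ := by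
  have face_le_one (c : Bool) (h : Fin s → G) :
      ‖𝔼 x, cubeProd (fun ε => f (Fin.cons c ε)) x h‖ ≤ 1 :=
    (RCLike.norm_expect_le (K := ℂ)).trans <| expect_le_one fun x =>
      norm_prod_le_one_of_forall _ fun ε => hf _ _
  rw [gowersForm_succ]
  refine (RCLike.norm_expect_le (K := ℂ)).trans (expect_le_expect fun h _ => ?_)
  rw [norm_mul]
  cases b
  · exact mul_le_of_le_one_right (norm_nonneg _) (face_le_one true h)
  · exact mul_le_of_le_one_left (norm_nonneg _) (face_le_one false h)

lemma norm_expect_sq_eq_expect_mulDeriv (g : G → ℂ) :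
    ((‖𝔼 x, g x‖ ^ 2 : ℝ) : ℂ) = 𝔼 k, 𝔼 x, mulDeriv k g x := by
  have expect_shift (x : G) : 𝔼 k, g (x + k) = 𝔼 y, g y :=
    Fintype.expect_equiv (Equiv.addLeft x) _ _ fun _ => rfl
  rw [expect_comm]
  simp only [mulDeriv, ← expect_mul, expect_shift, ← mul_expect]
  rw [← Complex.normSq_eq_norm_sq, ← Complex.mul_conj, ← Complex.conjAe_coe, map_expect]

lemma expect_norm_sq_expect_cubeProd (g : (Fin s → Bool) → G → ℂ) :
    ((𝔼 h, ‖𝔼 x, cubeProd g x h‖ ^ 2 : ℝ) : ℂ) =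
      𝔼 k, gowersForm fun ε => mulDeriv k (g ε) := by
  rw [Complex.ofReal_expect]
  simp only [norm_expect_sq_eq_expect_mulDeriv, gowersForm, cubeProd_mulDeriv]
  rw [expect_comm]
  exact expect_congr rfl fun k _ => expect_comm ..

/-- The induction splits off the first edge: it discards the face not containing `e`, squares, and
applies the previous case to the derivatives of the functions on the other face. -/
theorem norm_gowersForm_le_uniformityNorm {f : (Fin (s + 1) → Bool) → G → ℂ}
    (hf : ∀ ε x, ‖f ε x‖ ≤ 1) (e : Fin (s + 1) → Bool) :
    ‖gowersForm f‖ ≤ uniformityNorm (s + 1) (f e) := by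
  induction s with
  | zero =>
    refine (norm_gowersForm_le_expect_norm hf (e 0)).trans_eq ?_
    have cons_eq (ε : Fin 0 → Bool) : (Fin.cons (e 0) ε : Fin 1 → Bool) = e := by
      rw [Subsingleton.elim ε (Fin.tail e), Fin.cons_self_tail]
    simp [cubeProd, cubeDot, cons_eq, uniformityNorm]
  | succ s ih =>
    refine (norm_gowersForm_le_expect_norm hf (e 0)).trans ?_
    set g : (Fin (s + 1) → Bool) → G → ℂ := fun ε => f (Fin.cons (e 0) ε) with hg
    have g_tail : g (Fin.tail e) = f e := by rw [hg]; simp only [Fin.cons_self_tail]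
    refine le_of_pow_le_pow_left₀ two_ne_zero (uniformityNorm_nonneg _ _) ?_
    calc (𝔼 h, ‖𝔼 x, cubeProd g x h‖) ^ 2
        ≤ 𝔼 h, ‖𝔼 x, cubeProd g x h‖ ^ 2 :=
          pow_expect_le_expect_pow (fun h => norm_nonneg _) 2
      _ = ‖𝔼 k, gowersForm fun ε => mulDeriv k (g ε)‖ := by
          rw [← expect_norm_sq_expect_cubeProd, Complex.norm_of_nonneg (by positivity)]
      _ ≤ 𝔼 k, uniformityNorm (s + 1) (mulDeriv k (g (Fin.tail e))) :=
          (RCLike.norm_expect_le (K := ℂ)).trans <| expect_le_expect fun k _ =>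
            ih (fun ε => norm_mulDeriv_le_one (hf _) k) (Fin.tail e)
      _ ≤ uniformityNorm (s + 2) (f e) ^ 2 := g_tail ▸ expect_uniformityNorm_mulDeriv_le s _

end Cube

section WeightedForm

variable {G : Type*} [AddCommGroup G] {s : ℕ}

/-- The system `f` multiplied at the two endpoints of the edge from `η j` in direction `j` by
functions of those endpoints, the two factors coupled by a parameter `y j`. Averaging over `y`
produces the weight `avgConv (u j) (v j) (h j)`. -/
noncomputable def edgeTwist (η : Fin s → Fin s → Bool) (u v : Fin s → G → ℝ)
    (f : (Fin s → Bool) → G → ℂ) (y : Fin s → G) (ε : Fin s → Bool) (x : G) : ℂ :=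
  f ε x * ∏ j, ((if η j = ε then (u j (y j - x) : ℂ) else 1) *
    if Function.update (η j) j true = ε then (v j (x - y j) : ℂ) else 1)

lemma norm_edgeTwist_le_one (η : Fin s → Fin s → Bool) {u v : Fin s → G → ℝ}
    {f : (Fin s → Bool) → G → ℂ} (hu : ∀ j x, |u j x| ≤ 1) (hv : ∀ j x, |v j x| ≤ 1)
    (hf : ∀ ε x, ‖f ε x‖ ≤ 1) (y : Fin s → G) (ε : Fin s → Bool) (x : G) :
    ‖edgeTwist η u v f y ε x‖ ≤ 1 := by
  have norm_ite_le (P : Prop) [Decidable P] {r : ℝ} (hr : |r| ≤ 1) :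
      ‖if P then (r : ℂ) else 1‖ ≤ 1 := by
    split_ifs <;> simp [hr]
  rw [edgeTwist, norm_mul]
  refine mul_le_one₀ (hf _ _) (norm_nonneg _) (norm_prod_le_one_of_forall _ fun j => ?_)
  rw [norm_mul]
  exact mul_le_one₀ (norm_ite_le _ (hu _ _)) (norm_nonneg _) (norm_ite_le _ (hv _ _))

lemma cubeProd_edgeTwist (η : Fin s → Fin s → Bool) (u v : Fin s → G → ℝ)
    (f : (Fin s → Bool) → G → ℂ) (y : Fin s → G) (x : G) (h : Fin s → G) :
    cubeProd (edgeTwist η u v f y) x h = cubeProd f x h *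
      ∏ j, ((u j (y j - (x + cubeDot (η j) h)) : ℂ) *
        v j (x + cubeDot (Function.update (η j) j true) h - y j)) := by
  simp only [cubeProd, edgeTwist, prod_mul_distrib]
  congr 2 <;> rw [prod_comm] <;> simp only [prod_ite_eq, mem_univ, if_true]

variable [Fintype G]

/-- The normalized convolution of two functions on a finite abelian group. -/
noncomputable def avgConv (u v : G → ℝ) (x : G) : ℝ := 𝔼 y, u y * v (x - y)

lemma expect_sub_right (v : G → ℝ) (b : G) : 𝔼 x, v (x - b) = 𝔼 x, v x :=
  Fintype.expect_equiv (Equiv.subRight b) _ _ fun _ => rfl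

lemma expect_avgConv (u v : G → ℝ) : 𝔼 x, avgConv u v x = (𝔼 y, u y) * 𝔼 x, v x := by
  simp only [avgConv]
  rw [expect_comm]
  simp only [← mul_expect, expect_sub_right, ← expect_mul]

/-- The Gowers inner product with an extra weight on the edges `h` of the parallelepiped. -/
noncomputable def weightedForm (w : (Fin s → G) → ℝ) (f : (Fin s → Bool) → G → ℂ) : ℂ :=
  𝔼 x, 𝔼 h, (w h : ℂ) * cubeProd f x h

lemma weightedForm_sub (w w' : (Fin s → G) → ℝ) (f : (Fin s → Bool) → G → ℂ) :
    weightedForm (fun h => w h - w' h) f = weightedForm w f - weightedForm w' f := by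
  simp only [weightedForm, Complex.ofReal_sub, sub_mul, expect_sub_distrib]

lemma weightedForm_const_mul (c : ℝ) (w : (Fin s → G) → ℝ) (f : (Fin s → Bool) → G → ℂ) :
    weightedForm (fun h => c * w h) f = c * weightedForm w f := by
  simp only [weightedForm, Complex.ofReal_mul, mul_assoc, mul_expect]

lemma norm_weightedForm_le (w : (Fin s → G) → ℝ) {f : (Fin s → Bool) → G → ℂ}
    (hf : ∀ ε x, ‖f ε x‖ ≤ 1) :
    ‖weightedForm w f‖ ≤ (𝔼 x, ‖f (fun _ => false) x‖) * 𝔼 h, |w h| := by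
  rw [expect_mul_expect]
  refine (RCLike.norm_expect_le (K := ℂ)).trans (expect_le_expect fun x _ => ?_)
  refine (RCLike.norm_expect_le (K := ℂ)).trans (expect_le_expect fun h _ => ?_)
  rw [norm_mul, Complex.norm_real, Real.norm_eq_abs, mul_comm]
  gcongr
  exact norm_cubeProd_le hf x h

lemma expect_cubeProd_edgeTwist {η : Fin s → Fin s → Bool} (hη : ∀ j, η j j = false)
    (u v : Fin s → G → ℝ) (f : (Fin s → Bool) → G → ℂ) (x : G) (h : Fin s → G) :
    𝔼 y, cubeProd (edgeTwist η u v f y) x h =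
      ((∏ j, avgConv (u j) (v j) (h j) : ℝ) : ℂ) * cubeProd f x h := by
  have avgConv_eq (j : Fin s) : avgConv (u j) (v j) (h j) =
      𝔼 y, u j (y - (x + cubeDot (η j) h)) *
        v j (x + cubeDot (Function.update (η j) j true) h - y) := by
    refine Fintype.expect_equiv (Equiv.addLeft (x + cubeDot (η j) h)) _ _ fun b => ?_
    rw [cubeDot_update_true (hη j), Equiv.coe_addLeft, add_sub_cancel_left, ← add_assoc,
      add_sub_add_left_eq_sub]
  simp only [cubeProd_edgeTwist, ← mul_expect, avgConv_eq, prod_expect]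
  push_cast
  rw [mul_comm]

lemma exists_edge_avoiding (hs : 2 ≤ s) (e : Fin s → Bool) (j : Fin s) :
    ∃ η : Fin s → Bool, η j = false ∧ η ≠ e ∧ Function.update η j true ≠ e := by
  have : Nontrivial (Fin s) := Fin.nontrivial_iff_two_le.2 hs
  obtain ⟨k, hkj⟩ := exists_ne j
  refine ⟨fun i => if i = k then !(e k) else false, by simp [hkj.symm], fun h => ?_, fun h => ?_⟩
  · simpa using congrFun h k
  · simpa [hkj] using congrFun h k

theorem norm_weightedForm_prod_avgConv_le (hs : 2 ≤ s) {u v : Fin s → G → ℝ}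
    {f : (Fin s → Bool) → G → ℂ} (hu : ∀ j x, |u j x| ≤ 1) (hv : ∀ j x, |v j x| ≤ 1)
    (hf : ∀ ε x, ‖f ε x‖ ≤ 1) (e : Fin s → Bool) :
    ‖weightedForm (fun h => ∏ j, avgConv (u j) (v j) (h j)) f‖ ≤ uniformityNorm s (f e) := by
  choose η hη η_ne update_ne using exists_edge_avoiding hs e
  have form_eq : weightedForm (fun h => ∏ j, avgConv (u j) (v j) (h j)) f =
      𝔼 y, gowersForm (edgeTwist η u v f y) := by
    simp only [weightedForm, ← expect_cubeProd_edgeTwist hη, gowersForm]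
    rw [expect_comm (univ : Finset (Fin s → G)) (univ : Finset G)]
    exact expect_congr rfl fun x _ => expect_comm ..
  have twist_e (y : Fin s → G) : edgeTwist η u v f y e = f e := by
    ext x
    simp [edgeTwist, η_ne, update_ne]
  obtain ⟨t, rfl⟩ : ∃ t, s = t + 1 := ⟨s - 1, by omega⟩
  rw [form_eq]
  refine (RCLike.norm_expect_le (K := ℂ)).trans (expect_le univ_nonempty fun y _ => ?_)
  rw [← twist_e y]
  exact norm_gowersForm_le_uniformityNorm (norm_edgeTwist_le_one η hu hv hf y) e

lemma mul_expect_abs_prod_sub_prod_le {X : Type*} [Fintype X] {p q : X → ℝ} {α : ℝ}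
    (hp : ∀ x, 0 ≤ p x) (hq : ∀ x, 0 ≤ q x) (hpα : 𝔼 x, p x = α) (hqα : 𝔼 x, q x = α) :
    α * 𝔼 h : Fin s → X, |∏ j, p (h j) - ∏ j, q (h j)| ≤ s * (𝔼 x, |p x - q x|) * α ^ s := by
  have α_nonneg : 0 ≤ α := hpα ▸ expect_nonneg fun x _ => hp x
  induction s with
  | zero => simp
  | succ s ih =>
    have telescope (k : X) (h : Fin s → X) :
        |p k * ∏ j, p (h j) - q k * ∏ j, q (h j)| ≤
          |p k - q k| * ∏ j, p (h j) + q k * |∏ j, p (h j) - ∏ j, q (h j)| := by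
      rw [show p k * ∏ j, p (h j) - q k * ∏ j, q (h j) =
        (p k - q k) * ∏ j, p (h j) + q k * (∏ j, p (h j) - ∏ j, q (h j)) by ring]
      refine (abs_add_le _ _).trans_eq ?_
      rw [abs_mul, abs_mul, abs_of_nonneg (hq k), abs_of_nonneg (prod_nonneg fun j _ => hp (h j))]
    calc α * 𝔼 h : Fin (s + 1) → X, |∏ j, p (h j) - ∏ j, q (h j)|
        ≤ α * 𝔼 k, 𝔼 h : Fin s → X,
            (|p k - q k| * ∏ j, p (h j) + q k * |∏ j, p (h j) - ∏ j, q (h j)|) := by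
          simp only [expect_fin_cons, Fin.prod_univ_succ, Fin.cons_zero, Fin.cons_succ]
          gcongr
          exact telescope _ _
      _ = α * ((𝔼 x, |p x - q x|) * α ^ s +
            α * 𝔼 h : Fin s → X, |∏ j, p (h j) - ∏ j, q (h j)|) := by
          simp only [expect_add_distrib, ← mul_expect, ← expect_mul, ← prod_expect, hpα, hqα,
            prod_const, card_univ, Fintype.card_fin]
      _ ≤ α * ((𝔼 x, |p x - q x|) * α ^ s + s * (𝔼 x, |p x - q x|) * α ^ s) := by gcongr
      _ = (s + 1 : ℕ) * (𝔼 x, |p x - q x|) * α ^ (s + 1) := by push_cast; ring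

lemma expect_abs_sub_inv_mul_avgConv_le {p u : G → ℝ} {D : ℝ} (hu : ∀ x, 0 ≤ u x)
    (hu_pos : 0 < 𝔼 x, u x) (hD : ∀ b, u b ≠ 0 → 𝔼 x, |p x - p (x - b)| ≤ D) :
    𝔼 x, |p x - (𝔼 y, u y)⁻¹ * avgConv u p x| ≤ D := by
  set β := 𝔼 y, u y with hβ
  have sub_eq (x : G) : p x - β⁻¹ * avgConv u p x = β⁻¹ * 𝔼 b, u b * (p x - p (x - b)) := by
    simp only [mul_sub, expect_sub_distrib, ← expect_mul, ← hβ, avgConv]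
    field_simp
  calc 𝔼 x, |p x - β⁻¹ * avgConv u p x|
      ≤ 𝔼 x, β⁻¹ * 𝔼 b, u b * |p x - p (x - b)| := by
        refine expect_le_expect fun x _ => ?_
        rw [sub_eq, abs_mul, abs_of_pos (inv_pos.2 hu_pos)]
        gcongr
        refine (abs_expect_le _ _).trans_eq (expect_congr rfl fun b _ => ?_)
        rw [abs_mul, abs_of_nonneg (hu b)]
    _ = β⁻¹ * 𝔼 b, u b * 𝔼 x, |p x - p (x - b)| := by
        rw [← mul_expect, expect_comm]
        simp only [mul_expect]
    _ ≤ β⁻¹ * 𝔼 b, u b * D := by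
        refine mul_le_mul_of_nonneg_left (expect_le_expect fun b _ => ?_) (by positivity)
        by_cases hb : u b = 0
        · simp [hb]
        · exact mul_le_mul_of_nonneg_left (hD b hb) (hu b)
    _ = D := by rw [← expect_mul, ← hβ, inv_mul_cancel_left₀ hu_pos.ne']

theorem norm_weightedForm_prod_le (hs : 2 ≤ s) {p u : G → ℝ} {f : (Fin s → Bool) → G → ℂ} {D : ℝ}
    (hp : ∀ x, 0 ≤ p x) (hp_le : ∀ x, p x ≤ 1) (hu : ∀ x, 0 ≤ u x) (hu_le : ∀ x, u x ≤ 1)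
    (hu_pos : 0 < 𝔼 x, u x) (hD : ∀ b, u b ≠ 0 → 𝔼 x, |p x - p (x - b)| ≤ D)
    (hf : ∀ ε x, ‖f ε x‖ ≤ 1) (hf_zero : 𝔼 x, ‖f (fun _ => false) x‖ ≤ 𝔼 x, p x)
    (e : Fin s → Bool) :
    ‖weightedForm (fun h => ∏ j, p (h j)) f‖ ≤
      (𝔼 x, u x)⁻¹ ^ s * uniformityNorm s (f e) + s * D * (𝔼 x, p x) ^ s := by
  set β := 𝔼 x, u x
  set q : G → ℝ := fun x => β⁻¹ * avgConv u p x with hq_def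
  have hq (x : G) : 0 ≤ q x :=
    mul_nonneg (by positivity) (expect_nonneg fun y _ => mul_nonneg (hu _) (hp _))
  have expect_q : 𝔼 x, q x = 𝔼 x, p x := by
    rw [← mul_expect, expect_avgConv, inv_mul_cancel_left₀ hu_pos.ne']
  have smoothed : ‖weightedForm (fun h => ∏ j, q (h j)) f‖ ≤ β⁻¹ ^ s * uniformityNorm s (f e) := by
    have abs_le_one {w : G → ℝ} (hw : ∀ x, 0 ≤ w x) (hw_le : ∀ x, w x ≤ 1) (_ : Fin s) (x : G) :
        |w x| ≤ 1 := (abs_of_nonneg (hw x)).trans_le (hw_le x)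
    simp only [hq_def, prod_mul_distrib, prod_const, card_univ, Fintype.card_fin]
    rw [weightedForm_const_mul, norm_mul, Complex.norm_of_nonneg (by positivity)]
    gcongr
    exact norm_weightedForm_prod_avgConv_le hs (abs_le_one hu hu_le) (abs_le_one hp hp_le) hf e
  have error : ‖weightedForm (fun h => ∏ j, p (h j) - ∏ j, q (h j)) f‖ ≤
      s * D * (𝔼 x, p x) ^ s := by
    have p_nonneg : 0 ≤ 𝔼 x, p x := expect_nonneg fun x _ => hp x
    calc _ ≤ (𝔼 x, ‖f (fun _ => false) x‖) * 𝔼 h : Fin s → G, |∏ j, p (h j) - ∏ j, q (h j)| :=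
          norm_weightedForm_le _ hf
      _ ≤ (𝔼 x, p x) * 𝔼 h : Fin s → G, |∏ j, p (h j) - ∏ j, q (h j)| := by gcongr
      _ ≤ s * (𝔼 x, |p x - q x|) * (𝔼 x, p x) ^ s :=
          mul_expect_abs_prod_sub_prod_le hp hq rfl expect_q
      _ ≤ s * D * (𝔼 x, p x) ^ s := by
          gcongr
          exact expect_abs_sub_inv_mul_avgConv_le hu hu_pos hD
  rw [weightedForm_sub] at error
  linarith [norm_le_norm_add_norm_sub' (weightedForm (fun h => ∏ j, p (h j)) f)
    (weightedForm (fun h => ∏ j, q (h j)) f)]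

end WeightedForm

section FiberSum

variable {ι G : Type*} [DecidableEq G]

/-- The pushforward along `φ` of the weight `c` on the finite set `S`. With `c = 1` it counts
representations; for `φ` injective on `S` it is then the indicator function of `φ(S)`. -/
def fiberSum {R : Type*} [AddCommMonoid R] (φ : ι → G) (S : Finset ι) (c : ι → R) (x : G) : R :=
  ∑ i ∈ S with φ i = x, c i

lemma prod_fiberSum {R : Type*} [CommSemiring R] {s : ℕ} (φ : ι → G) (S : Finset ι) (c : ι → R)
    (h : Fin s → G) :
    ∏ j, fiberSum φ S c (h j) =
      fiberSum (fun n j => φ (n j)) (Fintype.piFinset fun _ => S) (fun n => ∏ j, c (n j)) h := by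
  simp only [fiberSum, prod_univ_sum]
  refine sum_congr ?_ fun _ _ => rfl
  ext n
  simp [funext_iff, forall_and]

lemma sum_fiberSum_mul [Fintype G] {R : Type*} [Semiring R] (φ : ι → G) (S : Finset ι) (c : ι → R)
    (Φ : G → R) : ∑ x, fiberSum φ S c x * Φ x = ∑ i ∈ S, c i * Φ (φ i) := by
  rw [← sum_fiberwise S φ]
  refine sum_congr rfl fun x _ => ?_
  rw [fiberSum, sum_mul]
  exact sum_congr rfl fun i hi => by rw [(mem_filter.1 hi).2]

lemma expect_fiberSum_one [Fintype G] (φ : ι → G) (S : Finset ι) :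
    𝔼 x, fiberSum φ S (fun _ => (1 : ℝ)) x = #S / Fintype.card G := by
  rw [Fintype.expect_eq_sum_div_card]
  simp only [fiberSum]
  rw [sum_fiberwise, sum_const, nsmul_one]

section Norm

variable {E : Type*} [SeminormedAddCommGroup E] {φ : ι → G} {S : Finset ι} {c : ι → E}

lemma norm_fiberSum_le (hc : ∀ i, ‖c i‖ ≤ 1) (x : G) :
    ‖fiberSum φ S c x‖ ≤ fiberSum φ S (fun _ => (1 : ℝ)) x :=
  norm_sum_le_of_le _ fun i _ => hc i

lemma norm_fiberSum_le_one (hφ : Set.InjOn φ S) (hc : ∀ i, ‖c i‖ ≤ 1) (x : G) :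
    ‖fiberSum φ S c x‖ ≤ 1 := by
  have fiber_card_le_one : #{i ∈ S | φ i = x} ≤ 1 := by
    refine card_le_one.2 fun i hi j hj => ?_
    rw [mem_filter] at hi hj
    exact hφ hi.1 hj.1 (hi.2.trans hj.2.symm)
  refine (norm_fiberSum_le hc x).trans ?_
  rw [fiberSum, sum_const, nsmul_one]
  exact_mod_cast fiber_card_le_one

lemma expect_norm_fiberSum_le [Fintype G] (φ : ι → G) (S : Finset ι) (hc : ∀ i, ‖c i‖ ≤ 1) :
    𝔼 x, ‖fiberSum φ S c x‖ ≤ #S / Fintype.card G :=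
  (expect_le_expect fun x _ => norm_fiberSum_le hc x).trans_eq (expect_fiberSum_one φ S)

end Norm

lemma weightedForm_fiberSum [AddCommGroup G] [Fintype G] {κ : Type*} {s : ℕ} (φ : ι → G)
    (S : Finset ι) (ψ : κ → G) (T : Finset κ) (c : κ → ℂ) {f : (Fin s → Bool) → G → ℂ}
    (hf : f (fun _ => false) = fiberSum ψ T c) :
    weightedForm (fun h => ∏ j, fiberSum φ S (fun _ => (1 : ℝ)) (h j)) f =
      ((Fintype.card G : ℂ) ^ (s + 1))⁻¹ * ∑ m ∈ T, c m *
        ∑ n ∈ Fintype.piFinset fun _ : Fin s => S,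
          ∏ ε ∈ univ.filter (fun ε : Fin s → Bool => ε ≠ fun _ => false),
            f ε (ψ m + cubeDot ε fun j => φ (n j)) := by
  have weight_eq (h : Fin s → G) : ((∏ j, fiberSum φ S (fun _ => (1 : ℝ)) (h j) : ℝ) : ℂ) =
      fiberSum (fun n j => φ (n j)) (Fintype.piFinset fun _ => S) (fun _ => (1 : ℂ)) h := by
    rw [prod_fiberSum]
    simp [fiberSum]
  simp only [weightedForm, weight_eq, cubeProd_eq_mul_prod_ne_zero, hf, mul_left_comm,
    ← mul_expect, Fintype.expect_eq_sum_div_card, sum_fiberSum_mul, ← mul_div_assoc, ← sum_div]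
  simp only [one_mul, Fintype.card_fun, Fintype.card_fin, Nat.cast_pow, div_eq_inv_mul,
    ← mul_assoc, ← mul_inv, ← pow_succ']

lemma fiberSum_natCast_Icc_sub_natCast [AddGroupWithOne G] (m n t : ℕ) (x : G) :
    fiberSum (Nat.cast : ℕ → G) (Icc m n) (fun _ => (1 : ℝ)) (x - t) =
      fiberSum Nat.cast (Icc (m + t) (n + t)) (fun _ => 1) x := by
  simp only [fiberSum, sum_filter, ← Ico_add_one_right_eq_Icc, add_right_comm n t]
  rw [← sum_Ico_add']
  simp only [eq_sub_iff_add_eq, Nat.cast_add]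

lemma expect_abs_fiberSum_Icc_sub_le [AddGroupWithOne G] [Fintype G] {m n : ℕ} (hmn : m ≤ n + 1)
    (t : ℕ) :
    𝔼 x : G, |fiberSum Nat.cast (Icc m n) (fun _ => (1 : ℝ)) x -
        fiberSum Nat.cast (Icc m n) (fun _ => 1) (x - t)| ≤ 2 * t / Fintype.card G := by
  let w (k l : ℕ) (x : G) : ℝ := fiberSum Nat.cast (Ico k l) (fun _ => 1) x
  have w_add {k l r : ℕ} (hkl : k ≤ l) (hlr : l ≤ r) (x : G) : w k l x + w l r x = w k r x := by
    simp only [w, fiberSum, sum_filter]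
    exact sum_Ico_consecutive _ hkl hlr
  have sub_eq (x : G) : fiberSum Nat.cast (Icc m n) (fun _ => (1 : ℝ)) x -
      fiberSum Nat.cast (Icc m n) (fun _ => 1) (x - t) =
        w m (m + t) x - w (n + 1) (n + 1 + t) x := by
    rw [fiberSum_natCast_Icc_sub_natCast, ← Ico_add_one_right_eq_Icc, ← Ico_add_one_right_eq_Icc,
      add_right_comm n t]
    linarith [w_add hmn (Nat.le_add_right (n + 1) t) x,
      w_add (Nat.le_add_right m t) (Nat.add_le_add_right hmn t) x]
  have expect_abs_w_le (k : ℕ) : 𝔼 x, |w k (k + t) x| ≤ t / Fintype.card G := by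
    simpa using expect_norm_fiberSum_le (Nat.cast : ℕ → G) (Ico k (k + t)) (c := fun _ => (1 : ℝ))
      (by simp)
  calc 𝔼 x : G, |fiberSum Nat.cast (Icc m n) (fun _ => (1 : ℝ)) x -
        fiberSum Nat.cast (Icc m n) (fun _ => 1) (x - t)|
      ≤ 𝔼 x, (|w m (m + t) x| + |w (n + 1) (n + 1 + t) x|) :=
        expect_le_expect fun x _ => (sub_eq x).symm ▸ abs_sub _ _
    _ ≤ t / Fintype.card G + t / Fintype.card G := by
        rw [expect_add_distrib]
        exact add_le_add (expect_abs_w_le m) (expect_abs_w_le (n + 1))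
    _ = 2 * t / Fintype.card G := by ring

end FiberSum

section Interval

variable {s L M : ℕ}

lemma natCast_epsDot {R : Type*} [NonAssocSemiring R] (ε : Fin s → Bool) (h : Fin s → ℕ) :
    ((epsDot ε h : ℕ) : R) = cubeDot ε fun j => (h j : R) := by
  simp [epsDot, cubeDot]

lemma epsDot_le (ε : Fin s → Bool) {h : Fin s → ℕ} (hh : ∀ j, h j ≤ M) : epsDot ε h ≤ s * M := by
  simpa [epsDot] using sum_le_card_nsmul univ (fun j => if ε j then h j else 0) M fun j _ => by
    split_ifs
    exacts [hh j, Nat.zero_le M]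

lemma natCast_sub_one_val_add_one [NeZero L] {n : ℕ} (hn : n ∈ Icc 1 L) :
    ((n : ZMod L) - 1).val + 1 = n := by
  obtain ⟨hn_pos, hn_le⟩ := mem_Icc.1 hn
  rw [← Nat.cast_one, ← Nat.cast_sub hn_pos, ZMod.val_cast_of_lt (by omega)]
  omega

lemma injOn_natCast_zmod {S : Finset ℕ} (hS : ∀ n ∈ S, n < L) :
    Set.InjOn (Nat.cast : ℕ → ZMod L) S :=
  (CharP.natCast_injOn_Iio (ZMod L) L).mono fun n hn => hS n hn

/-- The indicator function of the image in `ℤ/L` of a finite set of natural numbers smaller than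
`L`. -/
noncomputable def zmodIndicator (L : ℕ) (S : Finset ℕ) (x : ZMod L) : ℝ :=
  fiberSum Nat.cast S (fun _ => 1) x

lemma zmodIndicator_nonneg (S : Finset ℕ) (x : ZMod L) : 0 ≤ zmodIndicator L S x :=
  sum_nonneg fun _ _ => zero_le_one

lemma zmodIndicator_le_one {S : Finset ℕ} (hS : ∀ n ∈ S, n < L) (x : ZMod L) :
    zmodIndicator L S x ≤ 1 :=
  (le_abs_self _).trans <|
    norm_fiberSum_le_one (c := fun _ => (1 : ℝ)) (injOn_natCast_zmod hS) (fun _ => norm_one.le) x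

lemma expect_zmodIndicator [NeZero L] (S : Finset ℕ) : 𝔼 x, zmodIndicator L S x = #S / L := by
  simpa [zmodIndicator] using expect_fiberSum_one (Nat.cast : ℕ → ZMod L) S

lemma expect_abs_zmodIndicator_sub_le [NeZero L] {m n ℓ : ℕ} (hmn : m ≤ n + 1) (b : ZMod L)
    (hb : zmodIndicator L (range (ℓ + 1)) b ≠ 0) :
    𝔼 x, |zmodIndicator L (Icc m n) x - zmodIndicator L (Icc m n) (x - b)| ≤ 2 * ℓ / L := by
  rw [zmodIndicator, fiberSum] at hb
  obtain ⟨t, ht, -⟩ := exists_ne_zero_of_sum_ne_zero hb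
  obtain ⟨t_mem, rfl⟩ := mem_filter.1 ht
  refine (expect_abs_fiberSum_Icc_sub_le hmn t).trans ?_
  rw [ZMod.card]
  gcongr
  exact Nat.lt_succ_iff.1 (mem_range.1 t_mem)

/-- The sum of `∏ a ε (m + ε · h)` over the edge vectors `h ∈ [M]^s`, where the product omits the
base vertex `ε = 0`. -/
def puncturedCubeSum (a : (Fin s → Bool) → ℕ → ℂ) (M m : ℕ) : ℂ :=
  ∑ h ∈ Fintype.piFinset (fun _ : Fin s => Icc 1 M),
    ∏ ε ∈ univ.filter (fun ε : Fin s → Bool => ε ≠ fun _ => false), a ε (m + epsDot ε h)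

/-- The functions `a ε` transported to `ℤ/L`, completed at the base vertex by the weights `c m` on
`m ∈ [M]`. The interval `[L]` is identified with `ℤ/L` by placing `n` at the residue `n - 1`. -/
noncomputable def intervalSystem (L M : ℕ) (a : (Fin s → Bool) → ℕ → ℂ) (c : ℕ → ℂ)
    (ε : Fin s → Bool) (x : ZMod L) : ℂ :=
  if ε = fun _ => false then fiberSum (fun m : ℕ => (m : ZMod L) - 1) (Icc 1 M) c x
  else a ε (x.val + 1)

variable {a : (Fin s → Bool) → ℕ → ℂ} {c : ℕ → ℂ}

lemma norm_intervalSystem_le_one [NeZero L] (hM : M < L)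
    (ha : ∀ ε : Fin s → Bool, ε ≠ (fun _ => false) → ∀ n ∈ Icc 1 L, ‖a ε n‖ ≤ 1)
    (hc : ∀ m, ‖c m‖ ≤ 1) (ε : Fin s → Bool) (x : ZMod L) :
    ‖intervalSystem L M a c ε x‖ ≤ 1 := by
  rw [intervalSystem]
  split_ifs with hε
  · refine norm_fiberSum_le_one ((sub_left_injective (b := (1 : ZMod L))).comp_injOn ?_) hc x
    exact injOn_natCast_zmod fun n hn => (mem_Icc.1 hn).2.trans_lt hM
  · exact ha ε hε _ (mem_Icc.2 ⟨Nat.le_add_left 1 _, x.val_lt⟩)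

lemma weightedForm_intervalSystem [NeZero L] (hL : (s + 1) * M ≤ L)
    (a : (Fin s → Bool) → ℕ → ℂ) (c : ℕ → ℂ) :
    weightedForm (fun h => ∏ j, zmodIndicator L (Icc 1 M) (h j)) (intervalSystem L M a c) =
      ((L : ℂ) ^ (s + 1))⁻¹ * ∑ m ∈ Icc 1 M, c m * puncturedCubeSum a M m := by
  simp only [zmodIndicator]
  rw [weightedForm_fiberSum (ψ := fun m : ℕ => (m : ZMod L) - 1) (T := Icc 1 M) (c := c)
    (hf := by ext x; simp [intervalSystem]), ZMod.card]
  congr 1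
  refine sum_congr rfl fun m hm => ?_
  congr 1
  refine sum_congr rfl fun h hh => prod_congr rfl fun ε hε => ?_
  have vertex_mem : m + epsDot ε h ∈ Icc 1 L := by
    have := epsDot_le ε fun j => (mem_Icc.1 (Fintype.mem_piFinset.1 hh j)).2
    rw [mem_Icc] at hm ⊢
    constructor <;> linarith
  rw [intervalSystem, if_neg (mem_filter.1 hε).2, ← natCast_epsDot, sub_add_eq_add_sub,
    ← Nat.cast_add, natCast_sub_one_val_add_one vertex_mem]

lemma exists_phase_sum_mul_eq_sum_norm {ι : Type*} (T : Finset ι) (z : ι → ℂ) :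
    ∃ c : ι → ℂ, (∀ m, ‖c m‖ = 1) ∧ ∑ m ∈ T, c m * z m = ((∑ m ∈ T, ‖z m‖ : ℝ) : ℂ) := by
  choose c norm_c phase_eq using fun m => RCLike.exists_norm_eq_mul_self (z m)
  exact ⟨c, norm_c, by push_cast; exact sum_congr rfl fun m _ => (phase_eq m).symm⟩

lemma expect_norm_intervalSystem_zero_le [NeZero L] (M : ℕ) (a : (Fin s → Bool) → ℕ → ℂ)
    (hc : ∀ m, ‖c m‖ ≤ 1) : 𝔼 x, ‖intervalSystem L M a c (fun _ => false) x‖ ≤ M / L := by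
  simpa [intervalSystem] using
    expect_norm_fiberSum_le (fun m : ℕ => (m : ZMod L) - 1) (Icc 1 M) hc

theorem sum_norm_puncturedCubeSum_le [NeZero L] (hs : 2 ≤ s) (hL : (s + 1) * M ≤ L)
    (ha : ∀ ε : Fin s → Bool, ε ≠ (fun _ => false) → ∀ n ∈ Icc 1 L, ‖a ε n‖ ≤ 1)
    {e : Fin s → Bool} (he : e ≠ fun _ => false) {ℓ : ℕ} (hℓ : ℓ < L) :
    ((L : ℝ) ^ (s + 1))⁻¹ * ∑ m ∈ Icc 1 M, ‖puncturedCubeSum a M m‖ ≤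
      (L / (ℓ + 1)) ^ s * gowersNorm L s (fun n => a e (n + 1)) +
        s * (2 * ℓ / L) * (M / L) ^ s := by
  have L_pos : 0 < L := NeZero.pos L
  have M_lt_L : M < L := by nlinarith
  obtain ⟨c, norm_c, sum_phase⟩ :=
    exists_phase_sum_mul_eq_sum_norm (Icc 1 M) (puncturedCubeSum a M)
  have expect_edges : 𝔼 x, zmodIndicator L (Icc 1 M) x = M / L := by simp [expect_zmodIndicator]
  have expect_steps : 𝔼 x, zmodIndicator L (range (ℓ + 1)) x = (ℓ + 1) / L := by
    simp [expect_zmodIndicator]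
  have system_e : intervalSystem L M a c e = fun x => a e (x.val + 1) := by
    ext x
    rw [intervalSystem, if_neg he]
  have form_le := norm_weightedForm_prod_le hs (zmodIndicator_nonneg (Icc 1 M))
    (zmodIndicator_le_one fun n hn => (mem_Icc.1 hn).2.trans_lt M_lt_L)
    (zmodIndicator_nonneg (range (ℓ + 1)))
    (zmodIndicator_le_one fun n hn => (Nat.lt_succ_iff.1 (mem_range.1 hn)).trans_lt hℓ)
    (by rw [expect_steps]; positivity)
    (expect_abs_zmodIndicator_sub_le (Nat.le_add_left 1 M))
    (norm_intervalSystem_le_one M_lt_L ha fun m => (norm_c m).le)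
    ((expect_norm_intervalSystem_zero_le M a fun m => (norm_c m).le).trans_eq expect_edges.symm) e
  rw [weightedForm_intervalSystem hL, sum_phase, norm_mul, norm_inv, norm_pow, Complex.norm_natCast,
    Complex.norm_of_nonneg (sum_nonneg fun _ _ => norm_nonneg _), expect_edges, expect_steps,
    system_e, inv_div] at form_le
  rwa [gowersNorm_eq_uniformityNorm]

end Interval

section Optimization

variable {s M : ℕ}

lemma exists_smoothing_scale (s M : ℕ) {U : ℝ} (hU : 0 ≤ U) (hU_le : U ≤ 1) :
    ∃ ℓ : ℕ, ℓ ≤ M ∧ (ℓ : ℝ) ≤ M * U ^ ((s : ℝ) + 1)⁻¹ ∧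
      (M / (ℓ + 1)) ^ s * U ≤ U ^ ((s : ℝ) + 1)⁻¹ := by
  set r := U ^ ((s : ℝ) + 1)⁻¹
  have r_nonneg : 0 ≤ r := Real.rpow_nonneg hU _
  have r_le_one : r ≤ 1 := Real.rpow_le_one hU hU_le (by positivity)
  have r_pow : r ^ (s + 1) = U := by
    have := Real.rpow_inv_natCast_pow hU s.succ_ne_zero
    rwa [Nat.cast_succ] at this
  have floor_le : (⌊M * r⌋₊ : ℝ) ≤ M * r := Nat.floor_le (by positivity)
  refine ⟨⌊M * r⌋₊, ?_, floor_le, ?_⟩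
  · exact_mod_cast floor_le.trans (mul_le_of_le_one_right M.cast_nonneg r_le_one)
  · have ratio_le_one : M * r / (⌊M * r⌋₊ + 1) ≤ 1 :=
      div_le_one_of_le₀ (Nat.lt_floor_add_one _).le (by positivity)
    calc (M / (⌊M * r⌋₊ + 1)) ^ s * U = (M * r / (⌊M * r⌋₊ + 1)) ^ s * r := by
          rw [← r_pow, mul_div_right_comm]
          ring
      _ ≤ r := mul_le_of_le_one_left r_nonneg (pow_le_one₀ (by positivity) ratio_le_one)

lemma average_norm_puncturedCubeSum_le (hs : 2 ≤ s) (hM : 0 < M) {a : (Fin s → Bool) → ℕ → ℂ}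
    (ha : ∀ ε : Fin s → Bool, ε ≠ (fun _ => false) → ∀ n ∈ Icc 1 ((s + 1) * M), ‖a ε n‖ ≤ 1)
    {e : Fin s → Bool} (he : e ≠ fun _ => false) :
    (M : ℝ)⁻¹ * ∑ m ∈ Icc 1 M, ‖((M : ℂ) ^ s)⁻¹ * puncturedCubeSum a M m‖ ≤
      ((s + 1 : ℝ) ^ (2 * s + 1) + 2 * s) *
        gowersNorm ((s + 1) * M) s (fun n => a e (n + 1)) ^ ((s : ℝ) + 1)⁻¹ := by
  have : NeZero ((s + 1) * M) := ⟨by positivity⟩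
  set L := (s + 1) * M with hL
  set U := gowersNorm L s fun n => a e (n + 1) with hU
  have U_nonneg : 0 ≤ U := gowersNorm_nonneg _ _ _
  have U_le_one : U ≤ 1 := by
    rw [hU, gowersNorm_eq_uniformityNorm]
    exact uniformityNorm_le_one s fun x => ha e he _ (mem_Icc.2 ⟨Nat.le_add_left 1 _, x.val_lt⟩)
  obtain ⟨ℓ, ℓ_le, ℓ_le_mul, scale⟩ := exists_smoothing_scale s M U_nonneg U_le_one
  set r := U ^ ((s : ℝ) + 1)⁻¹
  have bound := sum_norm_puncturedCubeSum_le hs hL.ge ha he (ℓ := ℓ) (by nlinarith)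
  have L_cast : (L : ℝ) = (s + 1) * M := by rw [hL]; push_cast; rfl
  have M_pos : (0 : ℝ) < M := by exact_mod_cast hM
  calc (M : ℝ)⁻¹ * ∑ m ∈ Icc 1 M, ‖((M : ℂ) ^ s)⁻¹ * puncturedCubeSum a M m‖
      = (s + 1 : ℝ) ^ (s + 1) *
          (((L : ℝ) ^ (s + 1))⁻¹ * ∑ m ∈ Icc 1 M, ‖puncturedCubeSum a M m‖) := by
        simp only [norm_mul, norm_inv, norm_pow, Complex.norm_natCast, ← mul_sum, L_cast, mul_pow]
        field_simp
        ring
    _ ≤ (s + 1 : ℝ) ^ (s + 1) *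
          ((L / (ℓ + 1)) ^ s * U + s * (2 * ℓ / L) * (M / L) ^ s) := by gcongr
    _ = (s + 1 : ℝ) ^ (2 * s + 1) * ((M / (ℓ + 1)) ^ s * U) + 2 * s * (ℓ / M) := by
        rw [L_cast, mul_div_assoc, mul_pow, div_mul_cancel_right₀ M_pos.ne', inv_pow]
        field_simp
        ring
    _ ≤ (s + 1 : ℝ) ^ (2 * s + 1) * r + 2 * s * r := by
        gcongr
        exact (div_le_iff₀' M_pos).2 ℓ_le_mul
    _ = ((s + 1 : ℝ) ^ (2 * s + 1) + 2 * s) * r := by ring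

lemma succ_pow_add_two_mul_le (hs : 2 ≤ s) :
    (s + 1 : ℝ) ^ (2 * s + 1) + 2 * s ≤ (s + 1 : ℝ) ^ (s + 1) * ((2 * s : ℝ) ^ s + 1) := by
  have s_ge : (2 : ℝ) ≤ s := by exact_mod_cast hs
  have base_le : (s + 1 : ℝ) ^ s ≤ (2 * s : ℝ) ^ s := by gcongr; linarith
  have two_mul_le : (2 * s : ℝ) ≤ (s + 1 : ℝ) ^ (s + 1) :=
    calc (2 * s : ℝ) ≤ (s + 1 : ℝ) ^ 2 := by nlinarith
      _ ≤ (s + 1 : ℝ) ^ (s + 1) := pow_le_pow_right₀ (by linarith) (by omega)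
  calc (s + 1 : ℝ) ^ (2 * s + 1) + 2 * s
      = (s + 1 : ℝ) ^ (s + 1) * (s + 1 : ℝ) ^ s + 2 * s := by rw [← pow_add]; ring_nf
    _ ≤ (s + 1 : ℝ) ^ (s + 1) * (2 * s : ℝ) ^ s + (s + 1 : ℝ) ^ (s + 1) := by gcongr
    _ = (s + 1 : ℝ) ^ (s + 1) * ((2 * s : ℝ) ^ s + 1) := by ring

end Optimization

theorem short_interval_gowers_estimate_general
    (s M : ℕ) (hs : 2 ≤ s) (hM : 0 < M)
    (a : (Fin s → Bool) → ℕ → ℂ)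
    (ha : ∀ ε : Fin s → Bool, ε ≠ (fun _ => false) →
      ∀ n ∈ Finset.Icc 1 ((s + 1) * M), ‖a ε n‖ ≤ 1) :
    (M : ℝ)⁻¹ * ∑ m ∈ Finset.Icc 1 M,
      ‖((M : ℂ) ^ s)⁻¹ * ∑ h ∈ Fintype.piFinset (fun _ : Fin s => Finset.Icc 1 M),
          ∏ ε ∈ Finset.univ.filter (fun ε : Fin s → Bool => ε ≠ fun _ => false),
            a ε (m + epsDot ε h)‖
      ≤ ((s + 1 : ℝ) ^ (2 * s + 1) + 2 * s) *
        (⨅ ε : {ε : Fin s → Bool // ε ≠ fun _ => false},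
            gowersNorm ((s + 1) * M) s (fun n => a ε.1 (n + 1))) ^ (((s : ℝ) + 1)⁻¹) := by
  have : Nonempty {ε : Fin s → Bool // ε ≠ fun _ => false} :=
    ⟨⟨fun _ => true, fun h => Bool.noConfusion (congrFun h ⟨0, by omega⟩)⟩⟩
  obtain ⟨e, he⟩ := exists_eq_ciInf_of_finite
    (f := fun ε : {ε : Fin s → Bool // ε ≠ fun _ => false} =>
      gowersNorm ((s + 1) * M) s fun n => a ε.1 (n + 1))
  rw [← he]
  exact average_norm_puncturedCubeSum_le hs hM ha e.2

/-- Lemma 4.2 of the paper: for `s ≥ 2` and `a_ε : [(s+1)M] → ℂ` bounded by `1`,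
`𝔼_{m∈[M]} |𝔼_{h∈[M]^s} ∏_{ε≠0} a_ε(m+ε·h)|
  ≤ C_s (min_{ε≠0} ‖a_ε‖_{U^s(ℤ_{(s+1)M})}^{1/(s+1)} + 1/M)` with
`C_s = (s+1)^{s+1}((2s)^s+1)`.  Here the Gowers norm is taken of the periodic extension
of `a_ε · 1_{[(s+1)M]}` (the sequence `n ↦ a_ε (n+1)` on residues `0,…,(s+1)M-1`). -/
theorem short_interval_gowers_estimate
    (s M : ℕ) (hs : 2 ≤ s) (hM : 0 < M)
    (a : (Fin s → Bool) → ℕ → ℂ)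
    (ha : ∀ ε : Fin s → Bool, ε ≠ (fun _ => false) →
      ∀ n ∈ Finset.Icc 1 ((s + 1) * M), ‖a ε n‖ ≤ 1) :
    (M : ℝ)⁻¹ * ∑ m ∈ Finset.Icc 1 M,
      ‖((M : ℂ) ^ s)⁻¹ * ∑ h ∈ Fintype.piFinset (fun _ : Fin s => Finset.Icc 1 M),
          ∏ ε ∈ Finset.univ.filter (fun ε : Fin s → Bool => ε ≠ fun _ => false),
            a ε (m + epsDot ε h)‖
      ≤ ((s + 1 : ℝ) ^ (s + 1) * ((2 * s : ℝ) ^ s + 1)) *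
        ((⨅ ε : {ε : Fin s → Bool // ε ≠ fun _ => false},
            gowersNorm ((s + 1) * M) s (fun n => a ε.1 (n + 1))) ^ (((s : ℝ) + 1)⁻¹)
          + 1 / (M : ℝ)) := by
  refine (short_interval_gowers_estimate_general s M hs hM a ha).trans ?_
  have inf_nonneg := Real.iInf_nonneg fun ε : {ε : Fin s → Bool // ε ≠ fun _ => false} =>
    gowersNorm_nonneg ((s + 1) * M) s fun n => a ε.1 (n + 1)
  gcongr
  · exact succ_pow_add_two_mul_le hs
  · exact le_add_of_nonneg_right (by positivity)
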